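/- arXiv:2109.02709 — 2 statements merged into one kernel-verified Lean document; each statement's English description precedes it below -/
import Mathlib

section
/- Let φ be a Bernstein function with φ(0) = 0 and φ(∞) = ∞, let Ψ be its inverse, and let (μ_t)_{t>0} be the family of marginal laws of the subordinator associated with φ. Then for every t > 0 and every p > −1 such that ∫₀^∞ e^{−t x} Ψ(x)^p dx < ∞, one has E[ξ_t^{−p}] = ∫_{(0,∞)} x^{−p} μ_t(dx) = (t/Γ(p+1)) ∫₀^∞ e^{−t x} Ψ(x)^p dx. -/
open MeasureTheory Set Filter

/-- A Bernstein function on `(0,∞)`: a nonnegative smooth function whose derivatives satisfy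
`(−1)^{n−1} f^{(n)} ≥ 0` on `(0,∞)` for every `n ≥ 1`. -/
def IsBernsteinFn (f : ℝ → ℝ) : Prop :=
  (∀ x : ℝ, 0 < x → 0 ≤ f x) ∧ ContDiffOn ℝ (⊤ : ℕ∞) f (Ioi 0) ∧
    ∀ n : ℕ, 1 ≤ n → ∀ x : ℝ, 0 < x → 0 ≤ (-1 : ℝ) ^ (n - 1) * iteratedDeriv n f x

/-!
Let `ξ` be a positive random variable with `E[e^{−λξ}] = e^{−tφ(λ)}`, and mix the exponential laws
by taking `ξ` as the rate. The mixture has tail `P(· > a) = E[e^{−aξ}] = e^{−tφ(a)}`. The variable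
`Ψ(e)`, where `e` is exponential of rate `t`, has the same tail because `Ψ` inverts `φ`, so the two
laws agree. Comparing their `p`-th moments gives
`Γ(p+1) E[ξ^{−p}] = E[Ψ(e)^p] = t ∫₀^∞ e^{−tx} Ψ(x)^p dx`.
-/

open ProbabilityTheory Topology

theorem measure_eq_of_forall_ge_Ioi_eq {α : Type*} [TopologicalSpace α] [MeasurableSpace α]
    [SecondCountableTopology α] [LinearOrder α] [OrderTopology α] [BorelSpace α]
    {μ ν : Measure α} [IsProbabilityMeasure μ] [IsProbabilityMeasure ν] {a : α}
    (ha : μ (Ioi a) = 1) (h : ∀ b, a ≤ b → μ (Ioi b) = ν (Ioi b)) : μ = ν := by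
  have hle (b : α) (hb : b ≤ a) (κ : Measure α) [IsProbabilityMeasure κ] (hκ : κ (Ioi a) = 1) :
      κ (Ioi b) = 1 :=
    le_antisymm prob_le_one (hκ ▸ measure_mono (Ioi_subset_Ioi hb))
  refine Measure.ext_of_Iic _ _ fun b => ?_
  rw [← compl_Ioi, prob_compl_eq_one_sub measurableSet_Ioi, prob_compl_eq_one_sub measurableSet_Ioi]
  rcases le_total a b with hab | hba
  · rw [h b hab]
  · rw [hle b hba μ ha, hle b hba ν (h a le_rfl ▸ ha)]

section MomentGeneratingFunction

variable {Ω : Type*} {mΩ : MeasurableSpace Ω} {μ : Measure Ω} {X : Ω → ℝ}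

theorem ae_norm_exp_mul_le_one {l : ℝ} (hl : l ≤ 0) (hX : 0 ≤ᵐ[μ] X) :
    ∀ᵐ ω ∂μ, ‖Real.exp (l * X ω)‖ ≤ 1 := by
  filter_upwards [hX] with ω hω
  rw [Real.norm_eq_abs, Real.abs_exp, Real.exp_le_one_iff]
  exact mul_nonpos_of_nonpos_of_nonneg hl hω

variable [IsFiniteMeasure μ]

theorem integrable_exp_mul_of_nonpos_of_nonneg {l : ℝ} (hl : l ≤ 0) (hXm : AEMeasurable X μ)
    (hX : 0 ≤ᵐ[μ] X) : Integrable (fun ω => Real.exp (l * X ω)) μ :=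
  Integrable.of_bound (by fun_prop) 1 (ae_norm_exp_mul_le_one hl hX)

theorem continuousOn_mgf_Iic_zero (hXm : AEMeasurable X μ) (hX : 0 ≤ᵐ[μ] X) :
    ContinuousOn (mgf X μ) (Iic 0) :=
  continuousOn_of_dominated (bound := fun _ => 1) (fun _ _ => by fun_prop)
    (fun _ hl => ae_norm_exp_mul_le_one hl hX) (integrable_const _)
    (ae_of_all _ fun _ => by fun_prop)

theorem monotoneOn_mgf_Iic_zero (hXm : AEMeasurable X μ) (hX : 0 ≤ᵐ[μ] X) :
    MonotoneOn (mgf X μ) (Iic 0) := by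
  intro a ha b hb hab
  refine integral_mono_ae (integrable_exp_mul_of_nonpos_of_nonneg ha hXm hX)
    (integrable_exp_mul_of_nonpos_of_nonneg hb hXm hX) ?_
  filter_upwards [hX] with ω hω
  exact Real.exp_le_exp.2 (mul_le_mul_of_nonneg_right hab hω)

theorem tendsto_mgf_atBot_of_pos (hXm : AEMeasurable X μ) (hX : ∀ᵐ ω ∂μ, 0 < X ω) :
    Tendsto (mgf X μ) atBot (𝓝 0) := by
  rw [← integral_zero Ω ℝ (μ := μ)]
  refine tendsto_integral_filter_of_dominated_convergence (fun _ => 1)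
    (Eventually.of_forall fun _ => by fun_prop) ?_ (integrable_const _) ?_
  · filter_upwards [eventually_le_atBot 0] with l hl
    exact ae_norm_exp_mul_le_one hl (hX.mono fun _ h => h.le)
  · filter_upwards [hX] with ω hω
    exact Real.tendsto_exp_atBot.comp (tendsto_id.atBot_mul_const hω)

end MomentGeneratingFunction

section ExponentialLaw

theorem expMeasure_eq_withDensity_restrict_Ioi (r : ℝ) :
    expMeasure r = (volume.restrict (Ioi 0)).withDensity
      fun x => ENNReal.ofReal (r * Real.exp (-(r * x))) := by
  rw [restrict_Ioi_eq_restrict_Ici, ← withDensity_indicator measurableSet_Ici]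
  change volume.withDensity (exponentialPDF r) = _
  congr 1
  ext x
  rw [exponentialPDF_eq, indicator_apply]
  by_cases hx : 0 ≤ x <;> simp [hx]

theorem expMeasure_absolutelyContinuous_restrict_Ioi (r : ℝ) :
    expMeasure r ≪ volume.restrict (Ioi 0) :=
  expMeasure_eq_withDensity_restrict_Ioi r ▸ withDensity_absolutelyContinuous _ _

theorem ae_pos_expMeasure (r : ℝ) : ∀ᵐ x ∂expMeasure r, 0 < x :=
  (expMeasure_absolutelyContinuous_restrict_Ioi r).ae_le (ae_restrict_mem measurableSet_Ioi)

theorem lintegral_expMeasure (r : ℝ) (f : ℝ → ENNReal) :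
    ∫⁻ x, f x ∂expMeasure r =
      ∫⁻ x in Ioi 0, ENNReal.ofReal (r * Real.exp (-(r * x))) * f x := by
  rw [expMeasure_eq_withDensity_restrict_Ioi,
    lintegral_withDensity_eq_lintegral_mul_non_measurable _ (by fun_prop)
      (ae_of_all _ fun _ => ENNReal.ofReal_lt_top)]
  rfl

theorem expMeasure_Ioi {r a : ℝ} (hr : 0 < r) (ha : 0 ≤ a) :
    expMeasure r (Ioi a) = ENNReal.ofReal (Real.exp (-(r * a))) := by
  have := isProbabilityMeasure_expMeasure hr
  have hcdf := cdf_expMeasure_eq hr a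
  rw [if_pos ha, cdf_eq_real] at hcdf
  rw [← ofReal_measureReal, ← compl_Iic, probReal_compl_eq_one_sub measurableSet_Iic, hcdf,
    sub_sub_cancel]

theorem lintegral_rpow_expMeasure {r p : ℝ} (hr : 0 < r) (hp : -1 < p) :
    ∫⁻ x, ENNReal.ofReal (x ^ p) ∂expMeasure r =
      ENNReal.ofReal (r ^ (-p)) * ENNReal.ofReal (Real.Gamma (p + 1)) := by
  have hp' : 0 < p + 1 := by linarith
  have hint : IntegrableOn (fun x : ℝ => x ^ p * Real.exp (-(r * x))) (Ioi 0) := by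
    simpa using integrableOn_rpow_mul_exp_neg_mul_rpow hp one_pos hr
  have hmoment : r * ∫ x in Ioi 0, x ^ p * Real.exp (-(r * x)) =
      r ^ (-p) * Real.Gamma (p + 1) := by
    have h := Real.integral_rpow_mul_exp_neg_mul_Ioi hp' hr
    rw [add_sub_cancel_right] at h
    rw [h, one_div, Real.inv_rpow hr.le, Real.rpow_add_one hr.ne', Real.rpow_neg hr.le]
    field_simp
  rw [← ENNReal.ofReal_mul (by positivity), ← hmoment, ← integral_const_mul,
    ofReal_integral_eq_lintegral_ofReal (hint.const_mul r), lintegral_expMeasure]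
  · refine lintegral_congr fun x => ?_
    rw [← ENNReal.ofReal_mul (by positivity), mul_right_comm, mul_assoc]
  · filter_upwards [ae_restrict_mem measurableSet_Ioi] with x (hx : 0 < x)
    simp only [Pi.zero_apply]
    positivity

theorem measurable_expMeasure : Measurable expMeasure := by
  refine Measure.measurable_of_measurable_coe _ fun s hs => ?_
  simp_rw [expMeasure_eq_withDensity_restrict_Ioi, withDensity_apply _ hs]
  exact Measurable.lintegral_prod_right (by fun_prop)

end ExponentialLaw

section ExponentialMixture

variable {ν : Measure ℝ}

theorem isProbabilityMeasure_bind_expMeasure [IsProbabilityMeasure ν] (hν : ∀ᵐ x ∂ν, 0 < x) :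
    IsProbabilityMeasure (ν.bind expMeasure) :=
  isProbabilityMeasure_bind measurable_expMeasure.aemeasurable
    (hν.mono fun _ => isProbabilityMeasure_expMeasure)

theorem bind_expMeasure_Ioi [IsFiniteMeasure ν] (hν : ∀ᵐ x ∂ν, 0 < x) {a : ℝ} (ha : 0 ≤ a) :
    ν.bind expMeasure (Ioi a) = ENNReal.ofReal (mgf id ν (-a)) := by
  rw [Measure.bind_apply measurableSet_Ioi measurable_expMeasure.aemeasurable, mgf,
    ofReal_integral_eq_lintegral_ofReal
      (integrable_exp_mul_of_nonpos_of_nonneg (neg_nonpos.2 ha) aemeasurable_id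
        (hν.mono fun _ h => h.le))
      (ae_of_all _ fun _ => Real.exp_nonneg _)]
  refine lintegral_congr_ae ?_
  filter_upwards [hν] with x hx
  rw [expMeasure_Ioi hx ha, id, neg_mul, mul_comm]

theorem lintegral_rpow_bind_expMeasure (hν : ∀ᵐ x ∂ν, 0 < x) {p : ℝ} (hp : -1 < p) :
    ∫⁻ x, ENNReal.ofReal (x ^ p) ∂ν.bind expMeasure =
      (∫⁻ x, ENNReal.ofReal (x ^ (-p)) ∂ν) * ENNReal.ofReal (Real.Gamma (p + 1)) := by
  rw [Measure.lintegral_bind measurable_expMeasure.aemeasurable (by fun_prop),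
    ← lintegral_mul_const _ (by fun_prop)]
  exact lintegral_congr_ae (hν.mono fun x hx => lintegral_rpow_expMeasure hx hp)

end ExponentialMixture

/-- `φ` is the Laplace exponent at time `t` of the law `ν`: `∫ e^{−λx} ν(dx) = e^{−tφ(λ)}` for all
`λ ≥ 0`. The Laplace transform is the moment generating function of `ν` at `−λ`. -/
def IsLaplaceExponent (φ : ℝ → ℝ) (ν : Measure ℝ) (t : ℝ) : Prop :=
  ∀ l : ℝ, 0 ≤ l → mgf id ν (-l) = Real.exp (-t * φ l)

namespace IsLaplaceExponent

variable {φ Ψ : ℝ → ℝ} {ν : Measure ℝ} {t : ℝ}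

theorem apply_zero [IsProbabilityMeasure ν] (h : IsLaplaceExponent φ ν t) (ht : t ≠ 0) :
    φ 0 = 0 := by
  simpa [mgf_zero, ht] using (h 0 le_rfl).symm

theorem eq_neg_log_mgf_div (h : IsLaplaceExponent φ ν t) (ht : t ≠ 0) {l : ℝ} (hl : 0 ≤ l) :
    φ l = -Real.log (mgf id ν (-l)) / t := by
  rw [h l hl, Real.log_exp]
  field_simp

theorem continuousOn [IsFiniteMeasure ν] (h : IsLaplaceExponent φ ν t) (ht : t ≠ 0)
    (hν : ∀ᵐ x ∂ν, 0 ≤ x) : ContinuousOn φ (Ici 0) := by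
  have hmgf : ContinuousOn (fun l => mgf id ν (-l)) (Ici 0) :=
    (continuousOn_mgf_Iic_zero aemeasurable_id hν).comp (by fun_prop) fun l hl =>
      neg_nonpos.2 (mem_Ici.1 hl)
  refine ((hmgf.log fun l hl => ?_).neg.div_const t).congr fun l => h.eq_neg_log_mgf_div ht
  rw [h l hl]
  exact Real.exp_ne_zero _

theorem monotoneOn [IsFiniteMeasure ν] (h : IsLaplaceExponent φ ν t) (ht : 0 < t)
    (hν : ∀ᵐ x ∂ν, 0 ≤ x) : MonotoneOn φ (Ici 0) := by
  intro a ha b hb hab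
  have hmgf : mgf id ν (-b) ≤ mgf id ν (-a) :=
    monotoneOn_mgf_Iic_zero aemeasurable_id hν (neg_nonpos.2 (mem_Ici.1 hb))
      (neg_nonpos.2 (mem_Ici.1 ha)) (neg_le_neg hab)
  rw [h a ha, h b hb, Real.exp_le_exp] at hmgf
  exact le_of_mul_le_mul_left (by linarith) ht

theorem tendsto_atTop [IsFiniteMeasure ν] (h : IsLaplaceExponent φ ν t) (ht : 0 < t)
    (hν : ∀ᵐ x ∂ν, 0 < x) : Tendsto φ atTop atTop := by
  have hexp : Tendsto (fun l => Real.exp (-t * φ l)) atTop (𝓝 0) :=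
    ((tendsto_mgf_atBot_of_pos aemeasurable_id hν).comp tendsto_neg_atTop_atBot).congr'
      ((eventually_ge_atTop 0).mono h)
  exact (tendsto_const_mul_atBot_of_neg (neg_neg_of_pos ht)).1
    (Real.tendsto_exp_comp_nhds_zero.1 hexp)

theorem surjOn [IsProbabilityMeasure ν] (h : IsLaplaceExponent φ ν t) (ht : 0 < t)
    (hν : ∀ᵐ x ∂ν, 0 < x) : SurjOn φ (Ici 0) (Ici 0) := by
  intro y (hy : 0 ≤ y)
  obtain ⟨b, hb, hyb⟩ :=
    ((eventually_ge_atTop 0).and ((h.tendsto_atTop ht hν).eventually_ge_atTop y)).exists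
  have hcont := h.continuousOn ht.ne' (hν.mono fun _ h => h.le)
  have hy' : y ∈ Icc (φ 0) (φ b) := ⟨(h.apply_zero ht.ne').trans_le hy, hyb⟩
  exact image_mono Icc_subset_Ici_self
    (intermediate_value_Icc hb (hcont.mono Icc_subset_Ici_self) hy')

section Inverse

variable [IsProbabilityMeasure ν] (h : IsLaplaceExponent φ ν t) (ht : 0 < t)
  (hν : ∀ᵐ x ∂ν, 0 < x) (hinv : InvOn Ψ φ (Ici 0) (Ici 0))

include h ht hν hinv

theorem inverse_mapsTo : MapsTo Ψ (Ici 0) (Ici 0) :=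
  hinv.1.mapsTo (h.surjOn ht hν)

theorem lt_inverse_iff {a y : ℝ} (ha : 0 ≤ a) (hy : 0 ≤ y) : a < Ψ y ↔ φ a < y := by
  have hstrict : StrictMonoOn φ (Ici 0) :=
    (h.monotoneOn ht (hν.mono fun _ h => h.le)).strictMonoOn_of_injOn hinv.1.injOn
  rw [← hstrict.lt_iff_lt ha (h.inverse_mapsTo ht hν hinv hy), hinv.2 hy]

theorem aemeasurable_inverse (r : ℝ) : AEMeasurable Ψ (expMeasure r) := by
  have hmono : MonotoneOn Ψ (Ici 0) :=
    Function.monotoneOn_of_rightInvOn_of_mapsTo (h.monotoneOn ht (hν.mono fun _ h => h.le))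
      hinv.2 (h.inverse_mapsTo ht hν hinv)
  exact (aemeasurable_restrict_of_monotoneOn measurableSet_Ioi
    (hmono.mono Ioi_subset_Ici_self)).mono_ac (expMeasure_absolutelyContinuous_restrict_Ioi r)

theorem map_inverse_expMeasure_Ioi {a : ℝ} (ha : 0 ≤ a) :
    (expMeasure t).map Ψ (Ioi a) = ENNReal.ofReal (Real.exp (-(t * φ a))) := by
  have hφa : 0 ≤ φ a :=
    h.apply_zero ht.ne' ▸ h.monotoneOn ht (hν.mono fun _ h => h.le) self_mem_Ici ha ha
  rw [Measure.map_apply_of_aemeasurable (h.aemeasurable_inverse ht hν hinv t) measurableSet_Ioi,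
    ← expMeasure_Ioi ht hφa]
  refine measure_congr ?_
  filter_upwards [ae_pos_expMeasure t] with y hy
  exact propext (h.lt_inverse_iff ht hν hinv ha hy.le)

theorem map_inverse_expMeasure : (expMeasure t).map Ψ = ν.bind expMeasure := by
  have := isProbabilityMeasure_expMeasure ht
  have := Measure.isProbabilityMeasure_map (h.aemeasurable_inverse ht hν hinv t)
  have := isProbabilityMeasure_bind_expMeasure hν
  have hzero : (expMeasure t).map Ψ (Ioi 0) = 1 := by
    simp [h.map_inverse_expMeasure_Ioi ht hν hinv le_rfl, h.apply_zero ht.ne']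
  refine measure_eq_of_forall_ge_Ioi_eq hzero fun a ha => ?_
  rw [h.map_inverse_expMeasure_Ioi ht hν hinv ha, bind_expMeasure_Ioi hν ha, h a ha, neg_mul]

theorem ofReal_integral_exp_mul_inverse_rpow {s p : ℝ}
    (hint : IntegrableOn (fun x => Real.exp (-s * x) * Ψ x ^ p) (Ioi 0)) :
    ENNReal.ofReal (∫ x in Ioi 0, Real.exp (-s * x) * Ψ x ^ p) =
      ∫⁻ x in Ioi 0, ENNReal.ofReal (Real.exp (-s * x) * Ψ x ^ p) := by
  refine ofReal_integral_eq_lintegral_ofReal hint ?_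
  filter_upwards [ae_restrict_mem measurableSet_Ioi] with x hx
  have hΨ : 0 ≤ Ψ x := h.inverse_mapsTo ht hν hinv (Ioi_subset_Ici_self hx)
  exact mul_nonneg (Real.exp_nonneg _) (Real.rpow_nonneg hΨ p)

end Inverse

end IsLaplaceExponent

theorem stmt_4_general {φ Ψ : ℝ → ℝ} (hinv : InvOn Ψ φ (Ici 0) (Ici 0)) {ν : Measure ℝ}
    [IsProbabilityMeasure ν] (hν : ∀ᵐ x ∂ν, 0 < x) {t : ℝ} (ht : 0 < t)
    (hφ : IsLaplaceExponent φ ν t) {p : ℝ} (hp : -1 < p) :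
    ∫⁻ x, ENNReal.ofReal (x ^ (-p)) ∂ν =
      ENNReal.ofReal (t / Real.Gamma (p + 1)) *
        ∫⁻ x in Ioi 0, ENNReal.ofReal (Real.exp (-t * x) * Ψ x ^ p) := by
  have hΓ : 0 < Real.Gamma (p + 1) := Real.Gamma_pos_of_pos (by linarith)
  have hmoment : (∫⁻ x, ENNReal.ofReal (x ^ (-p)) ∂ν) * ENNReal.ofReal (Real.Gamma (p + 1)) =
      ENNReal.ofReal t * ∫⁻ x in Ioi 0, ENNReal.ofReal (Real.exp (-t * x) * Ψ x ^ p) := by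
    rw [← lintegral_rpow_bind_expMeasure hν hp, ← hφ.map_inverse_expMeasure ht hν hinv,
      lintegral_map' (by fun_prop) (hφ.aemeasurable_inverse ht hν hinv t), lintegral_expMeasure,
      ← lintegral_const_mul' _ _ ENNReal.ofReal_ne_top]
    refine lintegral_congr fun x => ?_
    rw [← ENNReal.ofReal_mul (by positivity), ← ENNReal.ofReal_mul ht.le, mul_assoc, neg_mul]
  rw [ENNReal.ofReal_div_of_pos hΓ, ← ENNReal.mul_div_right_comm, ← hmoment,
    ENNReal.mul_div_cancel_right (by simpa using hΓ) ENNReal.ofReal_ne_top]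

/-- Let `φ` be a Bernstein function with `φ(0) = 0`, `φ(∞) = ∞`, inverse `Ψ`,
and let `(μ_t)_{t>0}` be the marginal laws of the associated subordinator, i.e.
`∫ e^{−λx} μ_t(dx) = e^{−tφ(λ)}`. Then for every `t > 0` and every `p > −1` such that
`∫₀^∞ e^{−tx} Ψ(x)^p dx < ∞`, one has
`E[ξ_t^{−p}] = ∫ x^{−p} μ_t(dx) = (t/Γ(p+1)) ∫₀^∞ e^{−tx} Ψ(x)^p dx`. -/
theorem stmt_4 (φ Ψ : ℝ → ℝ) (hφ : IsBernsteinFn φ) (h0 : φ 0 = 0)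
    (hinf : Tendsto φ atTop atTop) (hinv : Set.InvOn Ψ φ (Ici 0) (Ici 0))
    (μ : ℝ → Measure ℝ) (hprob : ∀ t : ℝ, 0 < t → IsProbabilityMeasure (μ t))
    (hsupp : ∀ t : ℝ, 0 < t → μ t {x | x ≤ 0} = 0)
    (hlaplace : ∀ t : ℝ, 0 < t → ∀ l : ℝ, 0 ≤ l →
      ∫ x, Real.exp (-l * x) ∂(μ t) = Real.exp (-t * φ l)) :
    ∀ t : ℝ, 0 < t → ∀ p : ℝ, -1 < p →
      IntegrableOn (fun x => Real.exp (-t * x) * Ψ x ^ p) (Ioi 0) →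
      ∫⁻ x, ENNReal.ofReal (x ^ (-p)) ∂(μ t) =
        ENNReal.ofReal
          (t / Real.Gamma (p + 1) * ∫ x in Ioi (0 : ℝ), Real.exp (-t * x) * Ψ x ^ p) := by
  intro t ht p hp hint
  have := hprob t ht
  have hpos : ∀ᵐ x ∂μ t, 0 < x := by simpa [ae_iff] using hsupp t ht
  have hexp : IsLaplaceExponent φ (μ t) t := hlaplace t ht
  have hΓ : 0 < Real.Gamma (p + 1) := Real.Gamma_pos_of_pos (by linarith)
  rw [stmt_4_general hinv hpos ht hexp hp, ENNReal.ofReal_mul (by positivity),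
    hexp.ofReal_integral_exp_mul_inverse_rpow ht hpos hinv hint]
end

section
/- Let φ be a non-trivial (non-affine) Bernstein function with φ(0) = 0 and φ(∞) = ∞, let Ψ be its inverse, let (μ_t)_{t>0} be the family of marginal laws of the subordinator associated with φ, and let p ∈ (−1, 0). Then x ↦ e^{−t x} Ψ(x)^p is integrable in a neighborhood of ∞ for every t > 0, and the following are equivalent: (i) Ψ^p is integrable in a neighborhood of 0; (ii) t ↦ E[ξ_t^{−p}] = ∫ x^{−p} μ_t(dx) is a Bernstein function on (0,∞). In that case, for all t > 0, E[ξ_t^{−p}] = (1/Γ(p+1)) ∫₀^∞ (1 − e^{−t x}) (−(Ψ^p)'(x)) dx. -/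
open MeasureTheory Set Filter

/-!
The power `x ^ α`, `0 < α < 1`, is itself a Bernstein function,
`x ^ α = ∫ (1 - exp (-l x)) ν_α(dl)` with `ν_α` the Lévy measure of the stable subordinator.
For `α = -p`, integrating this against `μ_t` and pushing `ν_α` forward by `φ` gives
`E[ξ_t ^ α] = ∫ (1 - exp (-t x)) π(dx)` with `π = φ_* ν_α`, the Lévy–Khintchine form of a Bernstein
function of `t`, finite for one (equivalently every) `t` if and only if `∫ min x 1 π(dx) < ∞`.
Since `π` has tail `π (y, ∞) = Ψ y ^ (-α) / Γ (1 - α)`, the layer-cake formula turns this condition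
into the integrability of `Ψ ^ p` near `0`, and the substitution `x = φ l` gives the density of `π`.
-/

namespace IsBernsteinFn

variable {f g : ℝ → ℝ}

theorem congr (hf : IsBernsteinFn f) (h : EqOn g f (Ioi 0)) : IsBernsteinFn g := by
  refine ⟨fun x hx => (hf.1 x hx).trans_eq (h hx).symm, hf.2.1.congr h, fun n hn x hx => ?_⟩
  rw [h.iteratedDeriv_of_isOpen isOpen_Ioi n hx]
  exact hf.2.2 n hn x hx

theorem of_hasDerivAt (hf : ∀ x, 0 < x → 0 ≤ f x) (hderiv : ∀ x, 0 < x → HasDerivAt f (g x) x)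
    (hg : ContDiffOn ℝ (⊤ : ℕ∞) g (Ioi 0))
    (hsign : ∀ n x, 0 < x → 0 ≤ (-1 : ℝ) ^ n * iteratedDeriv n g x) : IsBernsteinFn f := by
  have heq : EqOn (deriv f) g (Ioi 0) := fun x hx => (hderiv x hx).deriv
  refine ⟨hf, (contDiffOn_infty_iff_deriv_of_isOpen isOpen_Ioi).2
    ⟨fun x hx => (hderiv x hx).differentiableAt.differentiableWithinAt, hg.congr heq⟩, ?_⟩
  intro n hn x hx
  obtain ⟨m, rfl⟩ := Nat.exists_eq_add_of_le' hn
  rw [iteratedDeriv_succ', heq.iteratedDeriv_of_isOpen isOpen_Ioi m hx, Nat.add_sub_cancel]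
  exact hsign m x hx

theorem differentiableAt (hf : IsBernsteinFn f) {x : ℝ} (hx : 0 < x) : DifferentiableAt ℝ f x :=
  (hf.2.1.differentiableOn (by simp)).differentiableAt (Ioi_mem_nhds hx)

theorem deriv_nonneg (hf : IsBernsteinFn f) {x : ℝ} (hx : 0 < x) : 0 ≤ deriv f x := by
  simpa using hf.2.2 1 le_rfl x hx

theorem antitoneOn_deriv (hf : IsBernsteinFn f) : AntitoneOn (deriv f) (Ioi 0) := by
  have hd : DifferentiableOn ℝ (deriv f) (Ioi 0) :=
    ((contDiffOn_infty_iff_deriv_of_isOpen isOpen_Ioi).1 hf.2.1).2.differentiableOn (by simp)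
  refine antitoneOn_of_deriv_nonpos (convex_Ioi 0) hd.continuousOn (by simpa using hd)
    fun x hx => ?_
  rw [interior_Ioi] at hx
  simpa [iteratedDeriv_succ] using hf.2.2 2 one_le_two x hx

/-- A vanishing derivative stays zero by concavity, so `f` would be bounded above. -/
theorem deriv_pos_of_tendsto_atTop (hf : IsBernsteinFn f) (htop : Tendsto f atTop atTop) {x : ℝ}
    (hx : 0 < x) : 0 < deriv f x := by
  refine (hf.deriv_nonneg hx).lt_of_ne fun hzero => ?_
  have hd : ∀ y ∈ Ici x, DifferentiableAt ℝ f y := fun y hy => hf.differentiableAt (hx.trans_le hy)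
  have hanti : AntitoneOn f (Ici x) := by
    refine antitoneOn_of_deriv_nonpos (convex_Ici x)
      (fun y hy => (hd y hy).continuousAt.continuousWithinAt)
      (fun y hy => (hd y (interior_subset hy)).differentiableWithinAt) fun y hy => ?_
    have hxy : x ≤ y := interior_subset hy
    exact (hf.antitoneOn_deriv hx (hx.trans_le hxy) hxy).trans hzero.ge
  obtain ⟨y, hlt, hxy⟩ := ((htop.eventually_gt_atTop (f x)).and (eventually_ge_atTop x)).exists
  exact (hanti self_mem_Ici hxy hxy).not_gt hlt

theorem strictMonoOn_of_tendsto_atTop (hf : IsBernsteinFn f) (hcont : ContinuousOn f (Ici 0))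
    (htop : Tendsto f atTop atTop) : StrictMonoOn f (Ici 0) :=
  strictMonoOn_of_deriv_pos (convex_Ici 0) hcont fun x hx =>
    hf.deriv_pos_of_tendsto_atTop htop (by simpa using hx)

theorem bijOn_Ioi_zero (hf : IsBernsteinFn f) (hcont : ContinuousOn f (Ici 0)) (h0 : f 0 = 0)
    (htop : Tendsto f atTop atTop) : BijOn f (Ioi 0) (Ioi 0) := by
  have hmono := hf.strictMonoOn_of_tendsto_atTop hcont htop
  have himage : f '' Ioi 0 = Ioi 0 := by rw [hcont.image_Ioi_of_strictMonoOn hmono htop, h0]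
  exact ⟨mapsTo_iff_image_subset.2 himage.le, hmono.injOn.mono Ioi_subset_Ici_self, himage.ge⟩

end IsBernsteinFn

section LaplaceTransform

variable {m : Measure ℝ} {t x : ℝ}

theorem exp_neg_mul_le_one (ht : 0 ≤ t) (hx : 0 ≤ x) : Real.exp (-t * x) ≤ 1 := by
  simpa using mul_nonneg ht hx

theorem integrable_exp_neg_mul [IsFiniteMeasure m] (hm : ∀ᵐ x ∂m, 0 ≤ x) (ht : 0 ≤ t) :
    Integrable (fun x => Real.exp (-t * x)) m := by
  refine (integrable_const (1 : ℝ)).mono' (by fun_prop) ?_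
  filter_upwards [hm] with x hx
  rw [Real.norm_of_nonneg (Real.exp_pos _).le]
  exact exp_neg_mul_le_one ht hx

theorem continuousOn_integral_exp_neg_mul [IsFiniteMeasure m] (hm : ∀ᵐ x ∂m, 0 ≤ x) :
    ContinuousOn (fun l : ℝ => ∫ x, Real.exp (-l * x) ∂m) (Ici 0) := by
  refine continuousOn_of_dominated (bound := fun _ => 1) (fun l _ => by fun_prop)
    (fun l (hl : 0 ≤ l) => ?_) (integrable_const _) (Eventually.of_forall fun x => by fun_prop)
  filter_upwards [hm] with x hx
  rw [Real.norm_of_nonneg (Real.exp_pos _).le]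
  exact exp_neg_mul_le_one hl hx

theorem continuousOn_of_integral_exp_eq_exp [IsFiniteMeasure m] (hm : ∀ᵐ x ∂m, 0 ≤ x) {φ : ℝ → ℝ}
    (ht : t ≠ 0) (hφ : ∀ l, 0 ≤ l → ∫ x, Real.exp (-l * x) ∂m = Real.exp (-t * φ l)) :
    ContinuousOn φ (Ici 0) := by
  have hpos : ∀ l ∈ Ici (0 : ℝ), ∫ x, Real.exp (-l * x) ∂m ≠ 0 := fun l hl =>
    hφ l hl ▸ (Real.exp_pos _).ne'
  refine (((continuousOn_integral_exp_neg_mul hm).log hpos).div_const (-t)).congr fun l hl => ?_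
  simp only [hφ l hl, Real.log_exp, mul_div_cancel_left₀ _ (neg_ne_zero.2 ht)]

end LaplaceTransform

section LevyKhintchine

open ProbabilityTheory

variable {π : Measure ℝ}

theorem min_one_le_mul_one_sub_exp {t x : ℝ} (ht : 0 < t) (hx : 0 ≤ x) :
    min x 1 ≤ (t + 1) / t * (1 - Real.exp (-t * x)) := by
  have hexp : Real.exp (-t * x) ≤ (1 + t * x)⁻¹ := by
    rw [neg_mul, Real.exp_neg]
    gcongr
    linarith [Real.add_one_le_exp (t * x)]
  have hrat : min x 1 ≤ (t + 1) / t * (1 - (1 + t * x)⁻¹) := by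
    have hden : 0 < 1 + t * x := by positivity
    have heq : (t + 1) / t * (1 - (1 + t * x)⁻¹) = (t + 1) * x / (1 + t * x) := by
      field_simp
      ring
    rw [heq, le_div_iff₀ hden]
    rcases le_total x 1 with h | h
    · rw [min_eq_left h]
      nlinarith [mul_nonneg ht.le hx]
    · rw [min_eq_right h]
      linarith
  exact hrat.trans (by gcongr)

theorem one_sub_exp_le_mul_min_one {t x : ℝ} (ht : 0 ≤ t) (hx : 0 ≤ x) :
    1 - Real.exp (-t * x) ≤ (t + 1) * min x 1 := by
  have hlin := Real.add_one_le_exp (-t * x)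
  have hexp := Real.exp_pos (-t * x)
  rcases le_total x 1 with h | h
  · rw [min_eq_left h]
    linarith
  · rw [min_eq_right h]
    linarith

theorem integrable_one_sub_exp_iff (hπ : ∀ᵐ x ∂π, 0 ≤ x) {t : ℝ} (ht : 0 < t) :
    Integrable (fun x => 1 - Real.exp (-t * x)) π ↔ Integrable (fun x => min x 1) π := by
  constructor <;> intro h
  · refine (h.const_mul ((t + 1) / t)).mono' (by fun_prop) ?_
    filter_upwards [hπ] with x hx
    rw [Real.norm_of_nonneg (le_min hx zero_le_one)]
    exact min_one_le_mul_one_sub_exp ht hx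
  · refine (h.const_mul (t + 1)).mono' (by fun_prop) ?_
    filter_upwards [hπ] with x hx
    rw [Real.norm_of_nonneg (sub_nonneg.2 (exp_neg_mul_le_one ht.le hx))]
    exact one_sub_exp_le_mul_min_one ht.le hx

theorem lintegral_one_sub_exp_ne_top_iff (hπ : ∀ᵐ x ∂π, 0 ≤ x) {t : ℝ} (ht : 0 < t) :
    ∫⁻ x, ENNReal.ofReal (1 - Real.exp (-t * x)) ∂π ≠ ⊤ ↔ Integrable (fun x => min x 1) π := by
  rw [lintegral_ofReal_ne_top_iff_integrable (by fun_prop) (by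
    filter_upwards [hπ] with x hx using sub_nonneg.2 (exp_neg_mul_le_one ht.le hx)),
    integrable_one_sub_exp_iff hπ ht]

theorem integral_one_sub_exp_eq_toReal_lintegral (hπ : ∀ᵐ x ∂π, 0 ≤ x) {t : ℝ} (ht : 0 ≤ t) :
    ∫ x, (1 - Real.exp (-t * x)) ∂π =
      (∫⁻ x, ENNReal.ofReal (1 - Real.exp (-t * x)) ∂π).toReal :=
  integral_eq_lintegral_of_nonneg_ae
    (by filter_upwards [hπ] with x hx using sub_nonneg.2 (exp_neg_mul_le_one ht hx)) (by fun_prop)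

theorem lintegral_min_eq_lintegral_tail (hπ : ∀ᵐ x ∂π, 0 ≤ x) {c : ℝ} (hc : 0 ≤ c) :
    ∫⁻ x, ENNReal.ofReal (min x c) ∂π = ∫⁻ y in Ioo 0 c, π (Ioi y) := by
  have htail : ∀ y, π {x | y < min x c} = (Iio c).indicator (fun y => π (Ioi y)) y := by
    intro y
    by_cases hy : y < c <;> simp [hy, Ioi_def]
  rw [lintegral_eq_lintegral_meas_lt π (by filter_upwards [hπ] with x hx using le_min hx hc)
    (by fun_prop)]
  simp only [htail]
  rw [setLIntegral_indicator measurableSet_Iio, inter_comm, Ioi_inter_Iio]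

theorem integrable_min_iff_integrableOn_tail (hπ : ∀ᵐ x ∂π, 0 ≤ x) {c : ℝ} (hc : 0 ≤ c)
    (hfin : ∀ y, 0 < y → π (Ioi y) ≠ ⊤) :
    Integrable (fun x => min x c) π ↔ IntegrableOn (fun y => π.real (Ioi y)) (Ioo 0 c) := by
  have hanti : Antitone fun y => π (Ioi y) := fun y z hyz => measure_mono (Ioi_subset_Ioi hyz)
  have hmeas : Measurable fun y => π.real (Ioi y) := hanti.measurable.ennreal_toReal
  have hmin : 0 ≤ᵐ[π] fun x => min x c := by filter_upwards [hπ] with x hx using le_min hx hc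
  rw [IntegrableOn, ← lintegral_ofReal_ne_top_iff_integrable (by fun_prop) hmin,
    ← lintegral_ofReal_ne_top_iff_integrable hmeas.aestronglyMeasurable
      (Eventually.of_forall fun y => measureReal_nonneg),
    lintegral_min_eq_lintegral_tail hπ hc,
    setLIntegral_congr_fun measurableSet_Ioo fun y hy => (ofReal_measureReal (hfin y hy.1)).symm]

theorem integrable_mul_exp_neg (hπ : ∀ᵐ x ∂π, 0 ≤ x) (hint : Integrable (fun x => min x 1) π)
    {t : ℝ} (ht : 0 < t) : Integrable (fun x => x * Real.exp (-t * x)) π := by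
  refine (((integrable_one_sub_exp_iff hπ ht).2 hint).const_mul t⁻¹).mono' (by fun_prop) ?_
  filter_upwards [hπ] with x hx
  have hinv : Real.exp (t * x) * Real.exp (-t * x) = 1 := by simp [← Real.exp_add]
  rw [Real.norm_of_nonneg (by positivity), inv_mul_eq_div, le_div_iff₀ ht]
  nlinarith [Real.add_one_le_exp (t * x), Real.exp_pos (-t * x)]

theorem hasDerivAt_integral_one_sub_exp (hπ : ∀ᵐ x ∂π, 0 ≤ x)
    (hint : Integrable (fun x => min x 1) π) {t : ℝ} (ht : 0 < t) :
    HasDerivAt (fun s => ∫ x, (1 - Real.exp (-s * x)) ∂π) (∫ x, x * Real.exp (-t * x) ∂π) t := by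
  refine (hasDerivAt_integral_of_dominated_loc_of_deriv_le
    (F' := fun s x => x * Real.exp (-s * x)) (bound := fun x => x * Real.exp (-(t / 2) * x))
    (Ioi_mem_nhds (half_lt_self ht)) (Eventually.of_forall fun s => by fun_prop)
    ((integrable_one_sub_exp_iff hπ ht).2 hint) (by fun_prop) ?_
    (integrable_mul_exp_neg hπ hint (half_pos ht)) (Eventually.of_forall fun x s _ => ?_)).2
  · filter_upwards [hπ] with x hx s (hs : t / 2 < s)
    rw [Real.norm_of_nonneg (by positivity)]
    gcongr
  · convert (((hasDerivAt_neg s).mul_const x).exp).const_sub 1 using 1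
    ring

theorem neg_one_pow_mul_iteratedDeriv_mgf_nonneg {Ω : Type*} [MeasurableSpace Ω] {κ : Measure Ω}
    {X : Ω → ℝ} (hX : ∀ᵐ ω ∂κ, X ω ≤ 0) {t : ℝ} (ht : t ∈ interior (integrableExpSet X κ))
    (n : ℕ) : 0 ≤ (-1 : ℝ) ^ n * iteratedDeriv n (mgf X κ) t := by
  rw [iteratedDeriv_mgf ht, ← integral_const_mul]
  refine integral_nonneg_of_ae ?_
  filter_upwards [hX] with ω hω
  have hpow : 0 ≤ (-X ω) ^ n := pow_nonneg (neg_nonneg.2 hω) n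
  rw [← mul_assoc, ← mul_pow, neg_one_mul]
  exact mul_nonneg hpow (Real.exp_pos _).le

/-- The derivative of `t ↦ ∫ (1 - exp (-t x)) π(dx)` is the Laplace transform of `x π(dx)`. -/
theorem isBernsteinFn_integral_one_sub_exp (hπ : ∀ᵐ x ∂π, 0 ≤ x)
    (hint : Integrable (fun x => min x 1) π) :
    IsBernsteinFn fun t => ∫ x, (1 - Real.exp (-t * x)) ∂π := by
  set κ : Measure ℝ := π.withDensity fun x => ENNReal.ofReal x with hκ
  have hdens : Measurable fun x : ℝ => ENNReal.ofReal x := by fun_prop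
  have hmgf : ∀ t, mgf (fun x => -x) κ t = ∫ x, x * Real.exp (-t * x) ∂π := by
    intro t
    rw [mgf, hκ, integral_withDensity_eq_integral_toReal_smul hdens (by simp)]
    refine integral_congr_ae ?_
    filter_upwards [hπ] with x hx
    simp [ENNReal.toReal_ofReal hx]
  have hsub : Ioi (0 : ℝ) ⊆ interior (integrableExpSet (fun x => -x) κ) := by
    refine interior_maximal (fun t ht => ?_) isOpen_Ioi
    rw [integrableExpSet, mem_ofPred_eq, hκ, integrable_withDensity_iff_integrable_smul' hdens
      (by simp)]
    refine (integrable_mul_exp_neg hπ hint ht).congr ?_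
    filter_upwards [hπ] with x hx
    simp [ENNReal.toReal_ofReal hx]
  have hκ0 : ∀ᵐ x ∂κ, -x ≤ 0 := by
    filter_upwards [(withDensity_absolutelyContinuous _ _).ae_le hπ] with x hx using neg_nonpos.2 hx
  refine IsBernsteinFn.of_hasDerivAt (g := mgf (fun x => -x) κ) (fun t ht => ?_) (fun t ht => ?_)
    ((analyticOn_mgf.mono hsub).contDiffOn (uniqueDiffOn_Ioi 0))
    fun n t ht => neg_one_pow_mul_iteratedDeriv_mgf_nonneg hκ0 (hsub ht) n
  · refine integral_nonneg_of_ae ?_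
    filter_upwards [hπ] with x hx using sub_nonneg.2 (exp_neg_mul_le_one ht.le hx)
  · rw [hmgf]
    exact hasDerivAt_integral_one_sub_exp hπ hint ht

theorem integrable_min_one_iff_isBernsteinFn (hπ : ∀ᵐ x ∂π, 0 ≤ x) {M : ℝ → ENNReal}
    (hM : ∀ t, 0 < t → M t = ∫⁻ x, ENNReal.ofReal (1 - Real.exp (-t * x)) ∂π) :
    Integrable (fun x => min x 1) π ↔
      (∀ t, 0 < t → M t ≠ ⊤) ∧ IsBernsteinFn fun t => (M t).toReal := by
  have hfin : ∀ t, 0 < t → (M t ≠ ⊤ ↔ Integrable (fun x => min x 1) π) := fun t ht => by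
    rw [hM t ht, lintegral_one_sub_exp_ne_top_iff hπ ht]
  refine ⟨fun hint => ⟨fun t ht => (hfin t ht).2 hint, ?_⟩,
    fun h => (hfin 1 one_pos).1 (h.1 1 one_pos)⟩
  refine (isBernsteinFn_integral_one_sub_exp hπ hint).congr fun t (ht : 0 < t) => ?_
  simp only [hM t ht, integral_one_sub_exp_eq_toReal_lintegral hπ ht.le]

end LevyKhintchine

section StableLevyMeasure

variable {α : ℝ}

/-- The Lévy measure `α / Γ(1 - α) * l ^ (-α - 1) dl` on `(0, ∞)` of the `α`-stable subordinator,
normalized so that its Laplace exponent is `x ↦ x ^ α`; meaningful for `0 < α < 1`. -/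
noncomputable def stableLevyMeasure (α : ℝ) : Measure ℝ :=
  (volume.restrict (Ioi 0)).withDensity fun l =>
    ENNReal.ofReal (α / Real.Gamma (1 - α) * l ^ (-α - 1))

namespace stableLevyMeasure

instance : SFinite (stableLevyMeasure α) := by
  unfold stableLevyMeasure
  infer_instance

theorem absolutelyContinuous : stableLevyMeasure α ≪ volume.restrict (Ioi 0) :=
  withDensity_absolutelyContinuous _ _

theorem ae_pos : ∀ᵐ l ∂stableLevyMeasure α, 0 < l :=
  absolutelyContinuous.ae_le (ae_restrict_mem measurableSet_Ioi)

theorem apply_Ioi (hα : α ∈ Ioo 0 1) {b : ℝ} (hb : 0 < b) :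
    stableLevyMeasure α (Ioi b) = ENNReal.ofReal (b ^ (-α) / Real.Gamma (1 - α)) := by
  have hexp : -α - 1 < -1 := by linarith [hα.1]
  have hΓ : 0 < Real.Gamma (1 - α) := Real.Gamma_pos_of_pos (sub_pos.2 hα.2)
  have hα0 : 0 < α := hα.1
  rw [stableLevyMeasure, withDensity_apply _ measurableSet_Ioi,
    Measure.restrict_restrict measurableSet_Ioi, inter_eq_left.2 (Ioi_subset_Ioi hb.le),
    ← ofReal_integral_eq_lintegral_ofReal ((integrableOn_Ioi_rpow_of_lt hexp hb).const_mul _),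
    integral_const_mul, integral_Ioi_rpow_of_lt hexp hb, sub_add_cancel]
  · congr 1
    field_simp
  · filter_upwards [ae_restrict_mem measurableSet_Ioi] with l (hl : b < l)
    have : 0 < l := hb.trans hl
    positivity

/-- The layer-cake formula for `1 - exp (-l x) = ∫ exp (-s) ds` over `0 < s < l x` reduces the
integral to the tails of the stable Lévy measure, and thereby to `Γ (1 - α)`. -/
theorem lintegral_one_sub_exp (hα : α ∈ Ioo 0 1) {x : ℝ} (hx : 0 ≤ x) :
    ∫⁻ l, ENNReal.ofReal (1 - Real.exp (-l * x)) ∂stableLevyMeasure α =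
      ENNReal.ofReal (x ^ α) := by
  obtain rfl | hx := hx.eq_or_lt
  · simp [Real.zero_rpow hα.1.ne']
  have hα1 : 0 < 1 - α := sub_pos.2 hα.2
  have hΓ : 0 < Real.Gamma (1 - α) := Real.Gamma_pos_of_pos hα1
  have hprimitive : ∀ l, 1 - Real.exp (-l * x) = ∫ s in (0 : ℝ)..l * x, Real.exp (-s) := by simp
  have htail : ∀ s ∈ Ioi (0 : ℝ),
      stableLevyMeasure α {l | s < l * x} * ENNReal.ofReal (Real.exp (-s)) =
        ENNReal.ofReal (x ^ α / Real.Gamma (1 - α) * (Real.exp (-s) * s ^ (1 - α - 1))) := by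
    intro s (hs : 0 < s)
    have hset : {l | s < l * x} = Ioi (s / x) := by
      ext l
      simp [div_lt_iff₀ hx]
    rw [hset, apply_Ioi hα (by positivity), ← ENNReal.ofReal_mul (by positivity),
      Real.div_rpow hs.le hx.le, Real.rpow_neg hx.le, sub_sub_cancel_left]
    congr 1
    field_simp
  simp only [hprimitive]
  rw [lintegral_comp_eq_lintegral_meas_lt_mul (stableLevyMeasure α)
    (by filter_upwards [ae_pos] with l hl using (mul_pos hl hx).le) (by fun_prop)
    (fun s _ => (by fun_prop : Continuous fun s : ℝ => Real.exp (-s)).intervalIntegrable _ _)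
    (Eventually.of_forall fun s => (Real.exp_pos _).le),
    setLIntegral_congr_fun measurableSet_Ioi htail, ← ofReal_integral_eq_lintegral_ofReal
      ((Real.GammaIntegral_convergent hα1).const_mul _), integral_const_mul,
    ← Real.Gamma_eq_integral hα1, div_mul_cancel₀ _ hΓ.ne']
  filter_upwards [ae_restrict_mem measurableSet_Ioi] with s (hs : 0 < s)
  positivity

theorem integral_eq (hα : α ∈ Ioo 0 1) (G : ℝ → ℝ) :
    ∫ l, G l ∂stableLevyMeasure α =
      α / Real.Gamma (1 - α) * ∫ l in Ioi (0 : ℝ), l ^ (-α - 1) * G l := by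
  have hΓ : 0 < Real.Gamma (1 - α) := Real.Gamma_pos_of_pos (sub_pos.2 hα.2)
  have hα0 : 0 < α := hα.1
  rw [stableLevyMeasure, integral_withDensity_eq_integral_toReal_smul (by fun_prop) (by simp),
    ← integral_const_mul]
  refine setIntegral_congr_fun measurableSet_Ioi fun l (hl : 0 < l) => ?_
  simp only [smul_eq_mul]
  rw [ENNReal.toReal_ofReal (by positivity), mul_assoc]

end stableLevyMeasure

theorem lintegral_rpow_eq_lintegral_stableLevyMeasure (hα : α ∈ Ioo 0 1) {m : Measure ℝ}
    [IsProbabilityMeasure m] (hm : ∀ᵐ x ∂m, 0 ≤ x) :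
    ∫⁻ x, ENNReal.ofReal (x ^ α) ∂m =
      ∫⁻ l, ENNReal.ofReal (1 - ∫ x, Real.exp (-l * x) ∂m) ∂stableLevyMeasure α := by
  calc ∫⁻ x, ENNReal.ofReal (x ^ α) ∂m
      = ∫⁻ x, ∫⁻ l, ENNReal.ofReal (1 - Real.exp (-l * x)) ∂stableLevyMeasure α ∂m := by
        refine lintegral_congr_ae ?_
        filter_upwards [hm] with x hx using (stableLevyMeasure.lintegral_one_sub_exp hα hx).symm
    _ = ∫⁻ l, ∫⁻ x, ENNReal.ofReal (1 - Real.exp (-l * x)) ∂m ∂stableLevyMeasure α :=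
        lintegral_lintegral_swap (by fun_prop)
    _ = ∫⁻ l, ENNReal.ofReal (1 - ∫ x, Real.exp (-l * x) ∂m) ∂stableLevyMeasure α := by
        refine lintegral_congr_ae ?_
        filter_upwards [stableLevyMeasure.ae_pos] with l hl
        have hexp := integrable_exp_neg_mul hm hl.le
        have hsub : Integrable (fun x => 1 - Real.exp (-l * x)) m := (integrable_const 1).sub hexp
        have hnonneg : ∀ᵐ x ∂m, 0 ≤ 1 - Real.exp (-l * x) := by
          filter_upwards [hm] with x hx using sub_nonneg.2 (exp_neg_mul_le_one hl.le hx)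
        rw [← ofReal_integral_eq_lintegral_ofReal hsub hnonneg,
          integral_sub (integrable_const 1) hexp]
        simp

end StableLevyMeasure

theorem integrableOn_exp_neg_mul_mul_of_antitoneOn {f : ℝ → ℝ} {a : ℝ} (hf : AntitoneOn f (Ici a))
    (hnonneg : ∀ x ∈ Ici a, 0 ≤ f x) {t : ℝ} (ht : 0 < t) :
    IntegrableOn (fun x => Real.exp (-t * x) * f x) (Ioi a) := by
  have hmeas : AEStronglyMeasurable f (volume.restrict (Ioi a)) :=
    (aemeasurable_restrict_of_antitoneOn measurableSet_Ioi
      (hf.mono Ioi_subset_Ici_self)).aestronglyMeasurable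
  refine ((exp_neg_integrableOn_Ioi a ht).mul_const (f a)).mono'
    ((by fun_prop : Continuous fun x => Real.exp (-t * x)).aestronglyMeasurable.mul hmeas) ?_
  filter_upwards [ae_restrict_mem measurableSet_Ioi] with x hx
  have hxa : x ∈ Ici a := Ioi_subset_Ici_self hx
  have hfx := hnonneg x hxa
  rw [Real.norm_of_nonneg (by positivity)]
  exact mul_le_mul_of_nonneg_left (hf self_mem_Ici hxa hxa) (Real.exp_pos _).le

theorem integrableOn_exp_neg_mul_mul_rpow_of_monotoneOn {f : ℝ → ℝ} {a r : ℝ}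
    (hf : MonotoneOn f (Ici a)) (hpos : MapsTo f (Ici a) (Ioi 0)) (hr : r ≤ 0) {t : ℝ}
    (ht : 0 < t) : IntegrableOn (fun x => Real.exp (-t * x) * f x ^ r) (Ioi a) :=
  integrableOn_exp_neg_mul_mul_of_antitoneOn
    ((Real.antitoneOn_rpow_Ioi_of_exponent_nonpos hr).comp_MonotoneOn hf hpos)
    (fun _ hx => Real.rpow_nonneg (hpos hx).le r) ht

section Subordination

variable {α : ℝ} {φ Ψ : ℝ → ℝ}

theorem aemeasurable_stableLevyMeasure (hφ : MonotoneOn φ (Ioi 0)) :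
    AEMeasurable φ (stableLevyMeasure α) :=
  (aemeasurable_restrict_of_monotoneOn measurableSet_Ioi hφ).mono_ac
    stableLevyMeasure.absolutelyContinuous

theorem ae_pos_map_stableLevyMeasure (hφ : MonotoneOn φ (Ioi 0))
    (hmaps : MapsTo φ (Ioi 0) (Ioi 0)) : ∀ᵐ x ∂(stableLevyMeasure α).map φ, 0 < x := by
  refine (ae_map_iff (aemeasurable_stableLevyMeasure hφ) measurableSet_Ioi).2 ?_
  filter_upwards [stableLevyMeasure.ae_pos] with l hl using hmaps hl

theorem lintegral_rpow_eq_lintegral_map_stableLevyMeasure (hα : α ∈ Ioo 0 1)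
    (hφ : MonotoneOn φ (Ioi 0)) {m : Measure ℝ} [IsProbabilityMeasure m] (hm : ∀ᵐ x ∂m, 0 ≤ x)
    {t : ℝ} (hlaplace : ∀ l, 0 < l → ∫ x, Real.exp (-l * x) ∂m = Real.exp (-t * φ l)) :
    ∫⁻ x, ENNReal.ofReal (x ^ α) ∂m =
      ∫⁻ x, ENNReal.ofReal (1 - Real.exp (-t * x)) ∂(stableLevyMeasure α).map φ := by
  rw [lintegral_rpow_eq_lintegral_stableLevyMeasure hα hm,
    lintegral_map' (by fun_prop) (aemeasurable_stableLevyMeasure hφ)]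
  refine lintegral_congr_ae ?_
  filter_upwards [stableLevyMeasure.ae_pos] with l hl
  rw [hlaplace l hl]

theorem map_stableLevyMeasure_Ioi (hα : α ∈ Ioo 0 1) (hφ : StrictMonoOn φ (Ioi 0))
    (hΨ : MapsTo Ψ (Ioi 0) (Ioi 0)) (hinv : RightInvOn Ψ φ (Ioi 0)) {y : ℝ} (hy : 0 < y) :
    (stableLevyMeasure α).map φ (Ioi y) =
      ENNReal.ofReal (Ψ y ^ (-α) / Real.Gamma (1 - α)) := by
  rw [Measure.map_apply_of_aemeasurable (aemeasurable_stableLevyMeasure hφ.monotoneOn)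
    measurableSet_Ioi, ← stableLevyMeasure.apply_Ioi hα (hΨ hy)]
  refine measure_congr (eventuallyEq_set.2 ?_)
  filter_upwards [stableLevyMeasure.ae_pos] with l hl
  rw [mem_Ioi, ← hφ.lt_iff_lt (hΨ hy) hl, hinv hy, mem_preimage, mem_Ioi]

theorem integrable_min_one_map_stableLevyMeasure_iff (hα : α ∈ Ioo 0 1)
    (hφ : StrictMonoOn φ (Ioi 0)) (hmaps : MapsTo φ (Ioi 0) (Ioi 0))
    (hΨ : MapsTo Ψ (Ioi 0) (Ioi 0)) (hinv : RightInvOn Ψ φ (Ioi 0)) :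
    Integrable (fun x => min x 1) ((stableLevyMeasure α).map φ) ↔
      IntegrableOn (fun y => Ψ y ^ (-α)) (Ioo 0 1) := by
  have hΓ : 0 < Real.Gamma (1 - α) := Real.Gamma_pos_of_pos (sub_pos.2 hα.2)
  have htail := fun y (hy : 0 < y) => map_stableLevyMeasure_Ioi hα hφ hΨ hinv hy
  have hreal : EqOn (fun y => ((stableLevyMeasure α).map φ).real (Ioi y))
      (fun y => Ψ y ^ (-α) * (Real.Gamma (1 - α))⁻¹) (Ioo 0 1) := fun y hy => by
    have hΨy : 0 < Ψ y := hΨ hy.1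
    simp only [measureReal_def, htail y hy.1]
    rw [ENNReal.toReal_ofReal (by positivity), div_eq_mul_inv]
  rw [integrable_min_iff_integrableOn_tail ((ae_pos_map_stableLevyMeasure hφ.monotoneOn hmaps).mono
    fun _ hx => hx.le) zero_le_one (fun y hy => (htail y hy).symm ▸ ENNReal.ofReal_ne_top),
    integrableOn_congr_fun hreal measurableSet_Ioo]
  exact integrable_mul_const_iff (inv_ne_zero hΓ.ne').isUnit _

theorem hasDerivAt_leftInverse_rpow {l φ' : ℝ} (hφ : HasStrictDerivAt φ φ' l) (hφ' : φ' ≠ 0)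
    (hinv : ∀ᶠ x in nhds l, Ψ (φ x) = x) (hl : l ≠ 0) (r : ℝ) :
    HasDerivAt (fun y => Ψ y ^ r) (φ'⁻¹ * r * l ^ (r - 1)) (φ l) := by
  have hΨ := (hφ.to_local_left_inverse hφ' hinv).hasDerivAt
  simpa only [hinv.self_of_nhds] using hΨ.rpow_const (Or.inl (hinv.self_of_nhds.trans_ne hl))

theorem integral_image_mul_deriv_leftInverse_rpow {s : Set ℝ} (hs : IsOpen s) (hs0 : 0 ∉ s)
    (hφ : ContDiffOn ℝ 1 φ s) (hφ' : ∀ l ∈ s, 0 < deriv φ l) (hinv : LeftInvOn Ψ φ s) (r : ℝ)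
    (G : ℝ → ℝ) :
    ∫ x in φ '' s, G x * deriv (fun y => Ψ y ^ r) x = r * ∫ l in s, l ^ (r - 1) * G (φ l) := by
  have hstrict : ∀ l ∈ s, HasStrictDerivAt φ (deriv φ l) l := fun l hl =>
    (hφ.contDiffAt (hs.mem_nhds hl)).hasStrictDerivAt one_ne_zero
  rw [integral_image_eq_integral_abs_deriv_smul hs.measurableSet
    (fun l hl => (hstrict l hl).hasDerivAt.hasDerivWithinAt) hinv.injOn, ← integral_const_mul]
  refine setIntegral_congr_fun hs.measurableSet fun l hl => ?_
  have hpos := hφ' l hl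
  have hderiv := hasDerivAt_leftInverse_rpow (hstrict l hl) hpos.ne'
    (by filter_upwards [hs.mem_nhds hl] with x hx using hinv hx) (ne_of_mem_of_not_mem hl hs0) r
  simp only [hderiv.deriv, smul_eq_mul, abs_of_pos hpos]
  field_simp

theorem integral_map_stableLevyMeasure (hα : α ∈ Ioo 0 1) (hφ : ContDiffOn ℝ 1 φ (Ioi 0))
    (hφ' : ∀ l ∈ Ioi (0 : ℝ), 0 < deriv φ l) (hinv : LeftInvOn Ψ φ (Ioi 0)) {G : ℝ → ℝ}
    (hG : Continuous G) :
    ∫ x, G x ∂(stableLevyMeasure α).map φ =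
      1 / Real.Gamma (1 - α) *
        ∫ x in φ '' Ioi 0, G x * (-deriv (fun y => Ψ y ^ (-α)) x) := by
  have hφmeas : AEMeasurable φ (stableLevyMeasure α) :=
    (hφ.continuousOn.aemeasurable measurableSet_Ioi).mono_ac stableLevyMeasure.absolutelyContinuous
  rw [integral_map hφmeas hG.aestronglyMeasurable, stableLevyMeasure.integral_eq hα]
  simp only [mul_neg, integral_neg]
  rw [integral_image_mul_deriv_leftInverse_rpow isOpen_Ioi self_notMem_Ioi hφ hφ' hinv]
  ring

end Subordination

/-- Let `φ` be a non-affine Bernstein function with `φ(0) = 0`, `φ(∞) = ∞`,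
inverse `Ψ`, marginal subordinator laws `(μ_t)_{t>0}`, and let `p ∈ (−1,0)`. Then
`x ↦ e^{−tx} Ψ(x)^p` is integrable near `∞` for every `t > 0`, and the following are
equivalent: (i) `Ψ^p` is integrable near `0`; (ii) `t ↦ E[ξ_t^{−p}]` is (finite and) a
Bernstein function. In that case
`E[ξ_t^{−p}] = (1/Γ(p+1)) ∫₀^∞ (1 − e^{−tx})(−(Ψ^p)'(x)) dx` for all `t > 0`. -/
theorem stmt_5 (φ Ψ : ℝ → ℝ) (hφ : IsBernsteinFn φ)
    (hnonaffine : ¬∃ c d : ℝ, ∀ x : ℝ, 0 ≤ x → φ x = c + d * x)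
    (h0 : φ 0 = 0) (hinf : Tendsto φ atTop atTop) (hinv : Set.InvOn Ψ φ (Ici 0) (Ici 0))
    (μ : ℝ → Measure ℝ) (hprob : ∀ t : ℝ, 0 < t → IsProbabilityMeasure (μ t))
    (hsupp : ∀ t : ℝ, 0 < t → μ t {x | x ≤ 0} = 0)
    (hlaplace : ∀ t : ℝ, 0 < t → ∀ l : ℝ, 0 ≤ l →
      ∫ x, Real.exp (-l * x) ∂(μ t) = Real.exp (-t * φ l))
    (p : ℝ) (hp : p ∈ Ioo (-1 : ℝ) 0) :
    (∀ t : ℝ, 0 < t → IntegrableOn (fun x => Real.exp (-t * x) * Ψ x ^ p) (Ioi 1)) ∧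
    (IntegrableOn (fun x => Ψ x ^ p) (Ioo 0 1) ↔
      ((∀ t : ℝ, 0 < t → ∫⁻ x, ENNReal.ofReal (x ^ (-p)) ∂(μ t) ≠ ⊤) ∧
        IsBernsteinFn (fun t => (∫⁻ x, ENNReal.ofReal (x ^ (-p)) ∂(μ t)).toReal))) ∧
    (IntegrableOn (fun x => Ψ x ^ p) (Ioo 0 1) →
      ∀ t : ℝ, 0 < t →
        (∫⁻ x, ENNReal.ofReal (x ^ (-p)) ∂(μ t)).toReal =
          (1 / Real.Gamma (p + 1)) *
            ∫ x in Ioi (0 : ℝ),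
              (1 - Real.exp (-t * x)) * (-(deriv (fun y => Ψ y ^ p) x))) := by
  obtain ⟨α, rfl⟩ : ∃ α, p = -α := ⟨-p, (neg_neg p).symm⟩
  have hα : α ∈ Ioo 0 1 := ⟨neg_neg_iff_pos.1 hp.2, neg_lt_neg_iff.1 hp.1⟩
  simp only [neg_neg, neg_add_eq_sub]
  have hpos : ∀ t, 0 < t → ∀ᵐ x ∂μ t, 0 ≤ x := fun t ht =>
    (measure_eq_zero_iff_ae_notMem.1 (hsupp t ht)).mono fun x hx => (not_le.1 hx).le
  have hcont : ContinuousOn φ (Ici 0) :=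
    have := hprob 1 one_pos
    continuousOn_of_integral_exp_eq_exp (hpos 1 one_pos) one_ne_zero (hlaplace 1 one_pos)
  have hmono := (hφ.strictMonoOn_of_tendsto_atTop hcont hinf).mono Ioi_subset_Ici_self
  have hbij := hφ.bijOn_Ioi_zero hcont h0 hinf
  obtain ⟨hleft, hright⟩ := hinv.mono (Ioi_subset_Ici_self (a := 0)) Ioi_subset_Ici_self
  have hΨ : MapsTo Ψ (Ioi 0) (Ioi 0) := hleft.mapsTo hbij.surjOn
  have hΨmono := Function.monotoneOn_of_rightInvOn_of_mapsTo hmono.monotoneOn hright hΨ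
  have hπ := (ae_pos_map_stableLevyMeasure (α := α) hmono.monotoneOn hbij.mapsTo).mono
    fun _ => le_of_lt
  have hmoment := fun t (ht : 0 < t) =>
    have := hprob t ht
    lintegral_rpow_eq_lintegral_map_stableLevyMeasure hα hmono.monotoneOn (hpos t ht) fun l hl =>
      hlaplace t ht l hl.le
  have h1 : Ici (1 : ℝ) ⊆ Ioi 0 := Ici_subset_Ioi.2 one_pos
  refine ⟨fun t => integrableOn_exp_neg_mul_mul_rpow_of_monotoneOn (hΨmono.mono h1)
      (hΨ.mono_left h1) (neg_nonpos.2 hα.1.le),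
    (integrable_min_one_map_stableLevyMeasure_iff hα hmono hbij.mapsTo hΨ hright).symm.trans
      (integrable_min_one_iff_isBernsteinFn hπ hmoment), fun _ t ht => ?_⟩
  rw [hmoment t ht, ← integral_one_sub_exp_eq_toReal_lintegral hπ ht.le,
    integral_map_stableLevyMeasure hα (hφ.2.1.of_le (by simp))
      (fun l => hφ.deriv_pos_of_tendsto_atTop hinf) hleft (by fun_prop), hbij.image_eq]
end
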